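/- Let k ≥ 2 and let τ ∈ S_k satisfy τ(k) = k and τ(k−1) ≠ k−1. Then for every n, the map χ sending a permutation π to the pair (R_π, F_π), where R_π = {(i, π(i)) : 1 ≤ i ≤ n} and F_π is the smallest Ferrers board containing R_π, restricts to a bijection between the set S_n(τ) of τ-avoiding permutations of [n] and the set of board-minimal full rook placements on Ferrers boards in F_n that avoid the pattern τ(1)…τ(k−1). In particular, |S_n(τ)| equals the number of board-minimal τ(1)…τ(k−1)-avoiding full rook placements on boards in F_n. -/

import Mathlib

/-! ### Patterns of length 3 and 4 as permutations (0-indexed values) -/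

def p123 : Equiv.Perm (Fin 3) :=
  ⟨![0,1,2], ![0,1,2], by intro x; fin_cases x <;> rfl, by intro x; fin_cases x <;> rfl⟩
def p132 : Equiv.Perm (Fin 3) :=
  ⟨![0,2,1], ![0,2,1], by intro x; fin_cases x <;> rfl, by intro x; fin_cases x <;> rfl⟩
def p213 : Equiv.Perm (Fin 3) :=
  ⟨![1,0,2], ![1,0,2], by intro x; fin_cases x <;> rfl, by intro x; fin_cases x <;> rfl⟩
def p231 : Equiv.Perm (Fin 3) :=
  ⟨![1,2,0], ![2,0,1], by intro x; fin_cases x <;> rfl, by intro x; fin_cases x <;> rfl⟩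
def p312 : Equiv.Perm (Fin 3) :=
  ⟨![2,0,1], ![1,2,0], by intro x; fin_cases x <;> rfl, by intro x; fin_cases x <;> rfl⟩
def p321 : Equiv.Perm (Fin 3) :=
  ⟨![2,1,0], ![2,1,0], by intro x; fin_cases x <;> rfl, by intro x; fin_cases x <;> rfl⟩
def p1342 : Equiv.Perm (Fin 4) :=
  ⟨![0,2,3,1], ![0,3,1,2], by intro x; fin_cases x <;> rfl, by intro x; fin_cases x <;> rfl⟩
def p1324 : Equiv.Perm (Fin 4) :=
  ⟨![0,2,1,3], ![0,2,1,3], by intro x; fin_cases x <;> rfl, by intro x; fin_cases x <;> rfl⟩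

/-! ### Perfect matchings of `[2n] = {1, …, 2n}` as finsets of pairs `(i,j)`, `i < j` -/

/-- `M` is a perfect matching of `{1, …, 2n}`. -/
def IsPerfectMatching (n : ℕ) (M : Finset (ℕ × ℕ)) : Prop :=
  (∀ p ∈ M, p.1 < p.2 ∧ 1 ≤ p.1 ∧ p.2 ≤ 2 * n) ∧
  ∀ x, 1 ≤ x → x ≤ 2 * n → ∃! p, p ∈ M ∧ (p.1 = x ∨ p.2 = x)

/-- The matching `M` contains the pattern `τ ∈ S_k`: there are
`i_1 < i_2 < ⋯ < i_{2k}` with `(i_a, i_{2k+1-τ(a)}) ∈ M` for all `1 ≤ a ≤ k`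
(written here 0-indexed). -/
def MatchContains {k : ℕ} (τ : Equiv.Perm (Fin k)) (M : Finset (ℕ × ℕ)) : Prop :=
  ∃ f : Fin (2 * k) → ℕ, StrictMono f ∧
    ∀ a : Fin k,
      (f ⟨a.1, by have := a.isLt; omega⟩,
       f ⟨2 * k - 1 - (τ a).1, by have := (τ a).isLt; omega⟩) ∈ M

def MatchAvoids {k : ℕ} (τ : Equiv.Perm (Fin k)) (M : Finset (ℕ × ℕ)) : Prop :=
  ¬ MatchContains τ M

/-! ### Dyck paths as lists of booleans (`true` = east step, `false` = south step) -/

/-- A Dyck path of semilength `n`, from `(0,n)` to `(n,0)`, staying weakly above `y = n - x`. -/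
def IsDyckPath (n : ℕ) (t : List Bool) : Prop :=
  t.length = 2 * n ∧ t.count true = n ∧
  ∀ i, (t.take i).count false ≤ (t.take i).count true

/-- The height (distance above the diagonal) of the `i`-th vertex of the path `t`. -/
def pathHeight (t : List Bool) (i : ℕ) : ℤ :=
  ((t.take i).count true : ℤ) - ((t.take i).count false : ℤ)

/-- `s` lies weakly below `t` (for paths of the same semilength). -/
def WeaklyBelow (s t : List Bool) : Prop := ∀ i, pathHeight s i ≤ pathHeight t i

/-- The shape of a matching of `[2n]`: an east step for each opener, a south step for
each closer. -/
def shapeOf (n : ℕ) (M : Finset (ℕ × ℕ)) : List Bool :=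
  (List.range (2 * n)).map fun x => decide ((x + 1) ∈ M.image Prod.fst)

/-- Number of returns of a path: south steps ending on the diagonal. -/
def returnsOf (t : List Bool) : ℕ :=
  ((Finset.range t.length).filter fun i =>
    t[i]? = some false ∧ (t.take (i+1)).count true = (t.take (i+1)).count false).card

/-- Height sequence of a path, as natural numbers. -/
def hseq (t : List Bool) (i : ℕ) : ℕ := (t.take i).count true - (t.take i).count false

/-- `η(F)`: the number of indices `0 ≤ i ≤ 2n` with `h_i = 2`. -/
def etaOf (n : ℕ) (t : List Bool) : ℕ :=
  ((Finset.range (2 * n + 1)).filter fun i => hseq t i = 2).card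

/-! ### Full rook placements on Ferrers boards -/

/-- The square in column `c`, row `r` (both 1-indexed from the bottom left) belongs to the
Ferrers board with border path `t ∈ F_n`. -/
def InBoard (n : ℕ) (t : List Bool) (c r : ℕ) : Prop :=
  1 ≤ c ∧ 1 ≤ r ∧ ∃ i, c ≤ (t.take i).count true ∧ (t.take i).count false + r ≤ n

/-- `R` is a full rook placement on the Ferrers board with border path `t ∈ F_n`:
one rook in each of the `n` rows and `n` columns. -/
def IsFullRookPlacement (n : ℕ) (t : List Bool) (R : Finset (ℕ × ℕ)) : Prop :=
  (∀ p ∈ R, InBoard n t p.1 p.2) ∧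
  (∀ c, 1 ≤ c → c ≤ n → ∃! p, p ∈ R ∧ p.1 = c) ∧
  (∀ r, 1 ≤ r → r ≤ n → ∃! p, p ∈ R ∧ p.2 = r)

/-- The rooks of `R` lying in the rectangle `Γ(V_i)` determined by the `i`-th border vertex. -/
def rectRooks (n : ℕ) (t : List Bool) (R : Finset (ℕ × ℕ)) (i : ℕ) : Finset (ℕ × ℕ) :=
  R.filter fun p => p.1 ≤ (t.take i).count true ∧ p.2 + (t.take i).count false ≤ n

/-- Length of the longest increasing sequence (in both coordinates) in a finite point set. -/
def lisLen (S : Finset (ℕ × ℕ)) : ℕ :=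
  (S.powerset.filter fun T => ∀ p ∈ T, ∀ q ∈ T, p.1 < q.1 → p.2 < q.2).sup Finset.card

/-- The full rook placement `R` on the board with border `t ∈ F_n` contains the pattern `τ`:
some rectangle `Γ(V_i)` contains an occurrence of `τ`. -/
def PlacementContains {k : ℕ} (τ : Equiv.Perm (Fin k)) (n : ℕ) (t : List Bool)
    (R : Finset (ℕ × ℕ)) : Prop :=
  ∃ i ≤ 2 * n, ∃ f : Fin k → ℕ × ℕ,
    (∀ a, f a ∈ R ∧ (f a).1 ≤ (t.take i).count true ∧ (f a).2 + (t.take i).count false ≤ n) ∧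
    (∀ a b : Fin k, a < b → (f a).1 < (f b).1) ∧
    (∀ a b : Fin k, τ a < τ b → (f a).2 < (f b).2)

def PlacementAvoids {k : ℕ} (τ : Equiv.Perm (Fin k)) (n : ℕ) (t : List Bool)
    (R : Finset (ℕ × ℕ)) : Prop :=
  ¬ PlacementContains τ n t R

/-- `R` is board-minimal on the board with border `t`: every peak corner square holds a rook. -/
def BoardMinimal (n : ℕ) (t : List Bool) (R : Finset (ℕ × ℕ)) : Prop :=
  ∀ i, t[i]? = some true → t[i+1]? = some false →
    ((t.take (i+1)).count true, n - (t.take (i+1)).count false) ∈ R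

/-- Board-minimal full rook placements on boards of `F_n` avoiding the pattern `σ`,
recorded as pairs (border path, rook set). -/
def MinPlacements (n : ℕ) {k : ℕ} (σ : Equiv.Perm (Fin k)) :
    Set (List Bool × Finset (ℕ × ℕ)) :=
  {tR | IsDyckPath n tR.1 ∧ IsFullRookPlacement n tR.1 tR.2 ∧ BoardMinimal n tR.1 tR.2 ∧
        PlacementAvoids σ n tR.1 tR.2}

/-! ### Pattern avoidance in permutations -/

def PermContains {n k : ℕ} (τ : Equiv.Perm (Fin k)) (π : Equiv.Perm (Fin n)) : Prop :=
  ∃ f : Fin k → Fin n, StrictMono f ∧ ∀ a b : Fin k, τ a < τ b → π (f a) < π (f b)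

def PermAvoids {n k : ℕ} (τ : Equiv.Perm (Fin k)) (π : Equiv.Perm (Fin n)) : Prop :=
  ¬ PermContains τ π

/-- The full rook placement associated to a permutation of `[n]`. -/
def permPlacement {n : ℕ} (π : Equiv.Perm (Fin n)) : Finset (ℕ × ℕ) :=
  Finset.univ.image fun i : Fin n => ((i : ℕ) + 1, (π i : ℕ) + 1)

/-! ### Matchings with fixed points -/

/-- A (not necessarily perfect) matching on `{1, …, m}`: pairwise disjoint pairs. -/
def IsPartialMatching (m : ℕ) (M : Finset (ℕ × ℕ)) : Prop :=
  (∀ p ∈ M, p.1 < p.2 ∧ 1 ≤ p.1 ∧ p.2 ≤ m) ∧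
  ∀ p ∈ M, ∀ q ∈ M, p ≠ q → p.1 ≠ q.1 ∧ p.1 ≠ q.2 ∧ p.2 ≠ q.1 ∧ p.2 ≠ q.2

/-- The fixed points (unmatched vertices) of a matching on `{1, …, m}`. -/
def fixedPts (m : ℕ) (M : Finset (ℕ × ℕ)) : Finset ℕ :=
  (Finset.Icc 1 m).filter fun x => ∀ p ∈ M, p.1 ≠ x ∧ p.2 ≠ x

/-- The matched vertices of a matching on `{1, …, m}`. -/
def matchedSet (m : ℕ) (M : Finset (ℕ × ℕ)) : Finset ℕ :=
  (Finset.Icc 1 m).filter fun x => ∃ p ∈ M, p.1 = x ∨ p.2 = x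

/-- The rank (1-based) of `x` inside the finset `S`. -/
def rankIn (S : Finset ℕ) (x : ℕ) : ℕ := (S.filter (· ≤ x)).card

/-- The matching obtained by removing the fixed points and relabeling increasingly. -/
def relabeled (m : ℕ) (M : Finset (ℕ × ℕ)) : Finset (ℕ × ℕ) :=
  M.image fun p => (rankIn (matchedSet m M) p.1, rankIn (matchedSet m M) p.2)

/-! ### Set partitions -/

/-- `(i,j)` is an arc of the set partition `P` of `{1, …, n}`: `i < j` lie in a common block
with no element of that block strictly between them. -/
def PartArc {n : ℕ} (P : Finpartition (Finset.Icc 1 n)) (i j : ℕ) : Prop :=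
  i < j ∧ ∃ B ∈ P.parts, i ∈ B ∧ j ∈ B ∧ ∀ x ∈ B, ¬(i < x ∧ x < j)

/-- The set partition `P` contains the pattern `τ ∈ S_k`. -/
def PartContains {k n : ℕ} (τ : Equiv.Perm (Fin k)) (P : Finpartition (Finset.Icc 1 n)) : Prop :=
  ∃ f : Fin (2 * k) → ℕ, StrictMono f ∧
    ∀ a : Fin k,
      PartArc P (f ⟨a.1, by have := a.isLt; omega⟩)
        (f ⟨2 * k - 1 - (τ a).1, by have := (τ a).isLt; omega⟩)

def PartAvoids {k n : ℕ} (τ : Equiv.Perm (Fin k)) (P : Finpartition (Finset.Icc 1 n)) : Prop :=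
  ¬ PartContains τ P

/-! ### Counting functions -/

/-- `|M_n(τ)|`: the number of `τ`-avoiding perfect matchings of `[2n]`. -/
noncomputable def mcount {k : ℕ} (τ : Equiv.Perm (Fin k)) (n : ℕ) : ℕ :=
  {M : Finset (ℕ × ℕ) | IsPerfectMatching n M ∧ MatchAvoids τ M}.ncard

/-- `|M_n(σ,τ)|`: the number of perfect matchings of `[2n]` avoiding both `σ` and `τ`. -/
noncomputable def mcount2 {k : ℕ} (σ τ : Equiv.Perm (Fin k)) (n : ℕ) : ℕ :=
  {M : Finset (ℕ × ℕ) | IsPerfectMatching n M ∧ MatchAvoids σ M ∧ MatchAvoids τ M}.ncard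

/-- `|P_n(τ)|`: the number of `τ`-avoiding set partitions of `[n]`. -/
noncomputable def pcount {k : ℕ} (τ : Equiv.Perm (Fin k)) (n : ℕ) : ℕ :=
  Nat.card {P : Finpartition (Finset.Icc 1 n) // PartAvoids τ P}

/-- `|P_n(σ,τ)|`: the number of set partitions of `[n]` avoiding both `σ` and `τ`. -/
noncomputable def pcount2 {k : ℕ} (σ τ : Equiv.Perm (Fin k)) (n : ℕ) : ℕ :=
  Nat.card {P : Finpartition (Finset.Icc 1 n) // PartAvoids σ P ∧ PartAvoids τ P}

/-- `|S_n(τ)|`: the number of `τ`-avoiding permutations of `[n]`. -/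
noncomputable def scount {k : ℕ} (τ : Equiv.Perm (Fin k)) (n : ℕ) : ℕ :=
  Nat.card {π : Equiv.Perm (Fin n) // PermAvoids τ π}

/-!
A board-minimal placement is determined by its rooks: its board is the union of the rectangles
`[0, a] × [0, b]` over the rooks `(a, b)`. The border of this union is traced greedily: it steps
east as long as some rook in the row just below the current vertex, or in a higher row, lies
further east, and south otherwise.

Avoidance matches because the last letter of `τ'` is not its largest one. If the rectangle of a
border vertex contains an occurrence of `τ'`, then the square in the column of its last rook and
the row of its highest rook is on the board, so board minimality puts a rook weakly north-east of
that square; this rook cannot belong to the occurrence and hence extends it to an occurrence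
of `τ`. Conversely, the last rook of an occurrence of `τ` lies in the rectangle of some border
vertex, which then contains all the others.
-/

section ListCounts

variable {α : Type*} [DecidableEq α]

lemma count_take_mono (a : α) (t : List α) : Monotone fun i ↦ (t.take i).count a :=
  fun _ _ h ↦ (List.take_prefix_take_left h).sublist.count_le a

lemma count_take_le_count (a : α) (t : List α) (i : ℕ) : (t.take i).count a ≤ t.count a :=
  (List.take_sublist i t).count_le a

lemma count_take_succ (a : α) (t : List α) (i : ℕ) :
    (t.take (i + 1)).count a = (t.take i).count a + if t[i]? = some a then 1 else 0 := by
  rw [List.take_add_one, List.count_append]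
  rcases t[i]? with _ | b <;> simp [List.count_singleton]

lemma count_take_succ_of_getElem? {a : α} {t : List α} {i : ℕ} (h : t[i]? = some a) :
    (t.take (i + 1)).count a = (t.take i).count a + 1 := by
  rw [count_take_succ, if_pos h]

lemma eq_of_count_take_eq {s t : List α}
    (h : ∀ a i, (s.take i).count a = (t.take i).count a) : s = t := by
  refine List.ext_getElem? fun i ↦ Option.ext fun a ↦ ?_
  have hsucc := h a (i + 1)
  rw [count_take_succ, count_take_succ, h a i] at hsucc
  split_ifs at hsucc <;> simp_all

lemma exists_getElem?_eq_and_count_take_eq {a : α} {t : List α} {m : ℕ} (h : m < t.count a) :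
    ∃ i, t[i]? = some a ∧ (t.take i).count a = m :=
  ⟨t.idxOfNth a m,
    List.getElem?_eq_some_iff.2 ⟨List.idxOfNth_lt_length_of_lt_count h, List.getElem_idxOfNth_eq⟩,
    by rw [← List.countBefore_eq_count_take, List.countBefore_idxOfNth_of_lt_count h]⟩

end ListCounts

section PrefixRec

variable {α : Type*}

/-- The list of length `m` in which every entry is `f` of the list of the entries preceding it
(course-of-values recursion along a list). -/
def prefixRec (f : List α → α) : ℕ → List α
  | 0 => []
  | m + 1 => prefixRec f m ++ [f (prefixRec f m)]

@[simp]
lemma length_prefixRec (f : List α → α) (m : ℕ) : (prefixRec f m).length = m := by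
  induction m with
  | zero => rfl
  | succ m ih => simp [prefixRec, ih]

lemma take_prefixRec (f : List α → α) {i m : ℕ} (h : i ≤ m) :
    (prefixRec f m).take i = prefixRec f i := by
  induction m, h using Nat.le_induction with
  | base => exact List.take_of_length_le (length_prefixRec f i).le
  | succ m him ih =>
    rw [prefixRec, List.take_append_of_le_length (by rwa [length_prefixRec]), ih]

lemma getElem?_prefixRec (f : List α → α) {i m : ℕ} (h : i < m) :
    (prefixRec f m)[i]? = some (f ((prefixRec f m).take i)) := by
  rw [take_prefixRec f h.le, ← List.getElem?_take_of_lt (Nat.lt_succ_self i),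
    take_prefixRec f (Nat.succ_le_of_lt h), prefixRec,
    List.getElem?_append_right (length_prefixRec f i).le]
  simp

end PrefixRec

section Paths

variable {t : List Bool}

lemma count_true_take_add_count_false_take (t : List Bool) (i : ℕ) :
    (t.take i).count true + (t.take i).count false = min i t.length := by
  rw [List.count_true_add_count_false, List.length_take]

lemma exists_peak_ge {i s : ℕ} (hs : (t.take i).count false ≤ s) (hst : s < t.count false)
    (hpos : 0 < (t.take i).count true) :
    ∃ j, t[j]? = some true ∧ t[j + 1]? = some false ∧
      (t.take i).count true ≤ (t.take (j + 1)).count true ∧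
      (t.take (j + 1)).count false ≤ s := by
  -- the peak is formed by the last east step `j` before the south step `p` leaving level `s`
  obtain ⟨p, hp, hps⟩ := exists_getElem?_eq_and_count_take_eq hst
  have hip : i ≤ p := by
    by_contra! hpi
    have := count_take_mono false t (Nat.succ_le_of_lt hpi)
    grind [count_take_succ_of_getElem? hp]
  have hcols : (t.take i).count true ≤ (t.take p).count true := count_take_mono true t hip
  obtain ⟨j, hj, hjp⟩ := exists_getElem?_eq_and_count_take_eq
    (show (t.take p).count true - 1 < t.count true by grind [count_take_le_count true t p])
  have hj' := count_take_succ_of_getElem? hj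
  have hjltp : j < p := by
    by_contra! hpj
    have := count_take_mono true t hpj
    grind
  refine ⟨j, hj, ?_, by omega, hps ▸ count_take_mono false t (Nat.succ_le_of_lt hjltp)⟩
  obtain rfl | hjp' : j + 1 = p ∨ j + 2 ≤ p := by omega
  · exact hp
  · have := count_take_mono true t hjp'
    have hlen : j + 1 < t.length := by grind
    have := count_take_succ true t (j + 1)
    grind

end Paths

section Boards

variable {n : ℕ} {t s : List Bool} {R : Finset (ℕ × ℕ)}

lemma IsDyckPath.count_false (ht : IsDyckPath n t) : t.count false = n := by
  have := List.count_true_add_count_false t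
  grind [IsDyckPath]

lemma InBoard.le_count_of_lt {c r i : ℕ} (h : InBoard n t c r)
    (hi : n < r + (t.take i).count false) : c ≤ (t.take i).count true := by
  obtain ⟨-, -, j, hc, hr⟩ := h
  have hji : j ≤ i := by
    by_contra! hij
    have := count_take_mono false t hij.le
    grind
  exact hc.trans (count_take_mono true t hji)

lemma InBoard.bounds {c r : ℕ} (h : InBoard n t c r) :
    c ∈ Finset.Icc 1 (t.count true) ∧ r ∈ Finset.Icc 1 n := by
  obtain ⟨hc, hr, i, hci, hri⟩ := h
  have := count_take_le_count true t i
  grind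

lemma InBoard.exists_peak (ht : IsDyckPath n t) {c r : ℕ} (h : InBoard n t c r) :
    ∃ j, t[j]? = some true ∧ t[j + 1]? = some false ∧
      c ≤ (t.take (j + 1)).count true ∧ (t.take (j + 1)).count false + r ≤ n := by
  obtain ⟨hc, hr, i, hci, hri⟩ := h
  have hfalse := ht.count_false
  obtain ⟨j, hj, hj', hcj, hrj⟩ :=
    exists_peak_ge (s := n - r) (by omega) (by omega) (hc.trans hci)
  exact ⟨j, hj, hj', hci.trans hcj, by omega⟩

lemma BoardMinimal.exists_rook_ge (hmin : BoardMinimal n t R) (ht : IsDyckPath n t) {c r : ℕ}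
    (h : InBoard n t c r) : ∃ p ∈ R, c ≤ p.1 ∧ r ≤ p.2 := by
  obtain ⟨j, hj, hj', hcj, hrj⟩ := h.exists_peak ht
  exact ⟨_, hmin j hj hj', hcj, Nat.le_sub_of_add_le' hrj⟩

lemma BoardMinimal.inBoard_iff (hmin : BoardMinimal n t R) (ht : IsDyckPath n t)
    (hR : IsFullRookPlacement n t R) {c r : ℕ} :
    InBoard n t c r ↔ 1 ≤ c ∧ 1 ≤ r ∧ ∃ p ∈ R, c ≤ p.1 ∧ r ≤ p.2 := by
  refine ⟨fun h ↦ ⟨h.1, h.2.1, hmin.exists_rook_ge ht h⟩, ?_⟩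
  rintro ⟨hc, hr, p, hp, hcp, hrp⟩
  obtain ⟨-, -, i, hci, hri⟩ := hR.1 p hp
  exact ⟨hc, hr, i, hcp.trans hci, by omega⟩

lemma IsDyckPath.count_true_take_le (hs : IsDyckPath n s) (ht : IsDyckPath n t)
    (h : ∀ c r, InBoard n s c r → InBoard n t c r) (i : ℕ) :
    (s.take i).count true ≤ (t.take i).count true := by
  by_contra! hlt
  have hsum_s := count_true_take_add_count_false_take s i
  have hsum_t := count_true_take_add_count_false_take t i
  rw [hs.1, ← ht.1] at hsum_s
  have hfalse : (t.take i).count false ≤ n := ht.count_false ▸ count_take_le_count false t i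
  -- the corner of the rectangle of the `i`-th vertex of `s` is not on the board of `t`
  have hcorner : InBoard n s ((s.take i).count true) (n - (s.take i).count false) :=
    ⟨by omega, by omega, i, le_rfl, by omega⟩
  exact hlt.not_ge ((h _ _ hcorner).le_count_of_lt (by omega))

lemma IsDyckPath.eq_of_inBoard_iff (hs : IsDyckPath n s) (ht : IsDyckPath n t)
    (h : ∀ c r, InBoard n s c r ↔ InBoard n t c r) : s = t := by
  have htrue (i : ℕ) : (s.take i).count true = (t.take i).count true :=
    (hs.count_true_take_le ht (fun c r ↦ (h c r).1) i).antisymm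
      (ht.count_true_take_le hs (fun c r ↦ (h c r).2) i)
  refine eq_of_count_take_eq fun b i ↦ ?_
  cases b
  · have hsum_s := count_true_take_add_count_false_take s i
    have hsum_t := count_true_take_add_count_false_take t i
    rw [hs.1, ← ht.1] at hsum_s
    have := htrue i
    omega
  · exact htrue i

lemma BoardMinimal.eq_of_boardMinimal (hs : BoardMinimal n s R) (ht : BoardMinimal n t R)
    (hds : IsDyckPath n s) (hdt : IsDyckPath n t) (hRs : IsFullRookPlacement n s R)
    (hRt : IsFullRookPlacement n t R) : s = t :=
  hds.eq_of_inBoard_iff hdt fun _ _ ↦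
    (hs.inBoard_iff hds hRs).trans (ht.inBoard_iff hdt hRt).symm

lemma IsFullRookPlacement.isDyckPath (hR : IsFullRookPlacement n t R)
    (hlen : t.length = 2 * n) (htrue : t.count true = n) : IsDyckPath n t := by
  refine ⟨hlen, htrue, fun i ↦ ?_⟩
  let cols := (t.take i).count true
  let rows := (t.take i).count false
  have hcols_le : cols ≤ n := htrue ▸ count_take_le_count true t i
  have hrows_le : rows ≤ n := by
    have := count_take_le_count false t i
    have := List.count_true_add_count_false t
    omega
  -- the `rows` top rows have their rooks in the `cols` leftmost columns
  have hcard : (Finset.Ioc (n - rows) n).card ≤ (Finset.Icc 1 cols).card := by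
    refine Finset.card_le_card_of_forall_subsingleton (fun r c ↦ (c, r) ∈ R) ?_ ?_
    · intro r hr
      rw [Finset.mem_Ioc] at hr
      obtain ⟨⟨c, r⟩, ⟨hp, rfl⟩, -⟩ := hR.2.2 r (by omega) hr.2
      have hboard := hR.1 _ hp
      exact ⟨c, Finset.mem_Icc.2 ⟨hboard.1, hboard.le_count_of_lt (by simp only; omega)⟩, hp⟩
    · intro c hc r hr r' hr'
      rw [Finset.mem_Icc] at hc
      exact congrArg Prod.snd <|
        (hR.2.1 c hc.1 (hc.2.trans hcols_le)).unique ⟨hr.2, rfl⟩ ⟨hr'.2, rfl⟩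
  rw [Nat.card_Ioc, Nat.card_Icc] at hcard
  omega

end Boards

section PermPlacement

variable {n : ℕ} {t : List Bool} {R : Finset (ℕ × ℕ)}

@[simp]
lemma mk_mem_permPlacement {π : Equiv.Perm (Fin n)} {x y : Fin n} :
    ((x : ℕ) + 1, (y : ℕ) + 1) ∈ permPlacement π ↔ π x = y := by
  simp [permPlacement, Fin.val_inj]

lemma mem_permPlacement {π : Equiv.Perm (Fin n)} {p : ℕ × ℕ} :
    p ∈ permPlacement π ↔ ∃ x : Fin n, ((x : ℕ) + 1, (π x : ℕ) + 1) = p := by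
  simp [permPlacement]

lemma permPlacement_injective : Function.Injective (permPlacement (n := n)) := by
  refine fun π π' h ↦ Equiv.ext fun x ↦ ?_
  rw [← mk_mem_permPlacement, h, mk_mem_permPlacement]

lemma exists_fin_add_one_eq {c : ℕ} (hc : 1 ≤ c) (hcn : c ≤ n) : ∃ x : Fin n, (x : ℕ) + 1 = c :=
  ⟨⟨c - 1, by omega⟩, Nat.sub_add_cancel hc⟩

lemma isFullRookPlacement_permPlacement {π : Equiv.Perm (Fin n)}
    (h : ∀ x : Fin n, InBoard n t (x + 1) (π x + 1)) :
    IsFullRookPlacement n t (permPlacement π) := by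
  refine ⟨fun p hp ↦ ?_, fun c hc hcn ↦ ?_, fun r hr hrn ↦ ?_⟩
  · obtain ⟨x, rfl⟩ := mem_permPlacement.1 hp
    exact h x
  · obtain ⟨x, rfl⟩ := exists_fin_add_one_eq hc hcn
    refine ⟨(x + 1, π x + 1), by simp, ?_⟩
    rintro _ ⟨hp, hpx⟩
    obtain ⟨y, rfl⟩ := mem_permPlacement.1 hp
    grind
  · obtain ⟨y, rfl⟩ := exists_fin_add_one_eq hr hrn
    refine ⟨(π.symm y + 1, y + 1), by simp, ?_⟩
    rintro _ ⟨hp, hpy⟩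
    obtain ⟨x, rfl⟩ := mem_permPlacement.1 hp
    obtain rfl : π x = y := Fin.ext (by simpa using hpy)
    simp

lemma IsFullRookPlacement.exists_permPlacement_eq (hR : IsFullRookPlacement n t R)
    (htrue : t.count true = n) : ∃ π : Equiv.Perm (Fin n), permPlacement π = R := by
  have hbounds : ∀ p ∈ R, ∃ x y : Fin n, ((x : ℕ) + 1, (y : ℕ) + 1) = p := by
    intro p hp
    obtain ⟨hc, hr⟩ := (hR.1 p hp).bounds
    rw [Finset.mem_Icc] at hc hr
    obtain ⟨x, hx⟩ := exists_fin_add_one_eq hc.1 (hc.2.trans_eq htrue)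
    obtain ⟨y, hy⟩ := exists_fin_add_one_eq hr.1 hr.2
    exact ⟨x, y, Prod.ext hx hy⟩
  have hcol (x : Fin n) : ∃! y : Fin n, ((x : ℕ) + 1, (y : ℕ) + 1) ∈ R := by
    obtain ⟨p, ⟨hp, hpx⟩, huniq⟩ := hR.2.1 (x + 1) (by omega) (by omega)
    obtain ⟨x', y, rfl⟩ := hbounds p hp
    obtain rfl : x' = x := by grind
    exact ⟨y, hp, fun y' hy' ↦ by grind⟩
  have hrow (y : Fin n) : ∃! x : Fin n, ((x : ℕ) + 1, (y : ℕ) + 1) ∈ R := by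
    obtain ⟨p, ⟨hp, hpy⟩, huniq⟩ := hR.2.2 (y + 1) (by omega) (by omega)
    obtain ⟨x, y', rfl⟩ := hbounds p hp
    obtain rfl : y' = y := by grind
    exact ⟨x, hp, fun x' hx' ↦ by grind⟩
  choose f hf hf_unique using hcol
  have hmem (x y : Fin n) : ((x : ℕ) + 1, (y : ℕ) + 1) ∈ R ↔ f x = y :=
    ⟨fun h ↦ (hf_unique x y h).symm, fun h ↦ h ▸ hf x⟩
  simp only [hmem] at hrow
  refine ⟨Equiv.ofBijective f (Function.bijective_iff_existsUnique f |>.2 hrow), ?_⟩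
  ext p
  rw [mem_permPlacement]
  refine ⟨?_, fun hp ↦ ?_⟩
  · rintro ⟨x, rfl⟩
    exact hf x
  · obtain ⟨x, y, rfl⟩ := hbounds p hp
    exact ⟨x, by simp [(hmem x y).1 hp]⟩

end PermPlacement

section MinimalBorder

variable {n : ℕ} (π : Equiv.Perm (Fin n))

/-- The border of the smallest Ferrers board `F_π` containing the rooks of `π`. From the vertex
`(e, n - s)` it steps east exactly when the row `n - s` just below it, or a higher row, has its
rook in a column east of `e`. -/
def minimalBorder : List Bool :=
  prefixRec (fun t ↦ decide (∃ x : Fin n, t.count true ≤ x ∧ n ≤ π x + 1 + t.count false)) (2 * n)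

@[simp]
lemma length_minimalBorder : (minimalBorder π).length = 2 * n :=
  length_prefixRec _ _

variable {π}

lemma eq_true_iff_of_getElem?_minimalBorder {i : ℕ} {b : Bool}
    (h : (minimalBorder π)[i]? = some b) :
    b = true ↔ ∃ x : Fin n, ((minimalBorder π).take i).count true ≤ x ∧
      n ≤ π x + 1 + ((minimalBorder π).take i).count false := by
  have hi : i < 2 * n := by simpa using (List.getElem?_eq_some_iff.1 h).1
  have hb := getElem?_prefixRec
    (fun t ↦ decide (∃ x : Fin n, t.count true ≤ x ∧ n ≤ π x + 1 + t.count false)) hi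
  rw [← minimalBorder, h, Option.some_inj] at hb
  rw [hb, decide_eq_true_iff]

lemma exists_rook_of_east_minimalBorder {i : ℕ} (h : (minimalBorder π)[i]? = some true) :
    ∃ x : Fin n, ((minimalBorder π).take i).count true ≤ x ∧
      n ≤ π x + 1 + ((minimalBorder π).take i).count false :=
  (eq_true_iff_of_getElem?_minimalBorder h).1 rfl

lemma lt_of_south_minimalBorder {i : ℕ} (h : (minimalBorder π)[i]? = some false) {x : Fin n}
    (hx : n ≤ π x + 1 + ((minimalBorder π).take i).count false) :
    x < ((minimalBorder π).take i).count true := by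
  by_contra! hlt
  exact Bool.false_ne_true ((eq_true_iff_of_getElem?_minimalBorder h).2 ⟨x, hlt, hx⟩)

variable (π)

lemma count_true_minimalBorder : (minimalBorder π).count true = n := by
  have hlen := List.count_true_add_count_false (minimalBorder π)
  rw [length_minimalBorder] at hlen
  have htrue : (minimalBorder π).count true ≤ n := by
    by_contra! hlt
    obtain ⟨j, hj, hjn⟩ := exists_getElem?_eq_and_count_take_eq hlt
    obtain ⟨x, hx, -⟩ := exists_rook_of_east_minimalBorder hj
    omega
  have hfalse : (minimalBorder π).count false ≤ n := by
    by_contra! hlt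
    obtain ⟨j, hj, hjn⟩ := exists_getElem?_eq_and_count_take_eq hlt
    have hj2n : j < 2 * n := by simpa using (List.getElem?_eq_some_iff.1 hj).1
    have hlast := lt_of_south_minimalBorder hj (x := ⟨n - 1, by omega⟩) (by omega)
    have hsum := count_true_take_add_count_false_take (minimalBorder π) j
    rw [length_minimalBorder] at hsum
    simp only at hlast
    omega
  omega

lemma inBoard_minimalBorder (x : Fin n) : InBoard n (minimalBorder π) (x + 1) (π x + 1) := by
  have hfalse : n - 1 - π x < (minimalBorder π).count false := by
    have := List.count_true_add_count_false (minimalBorder π)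
    rw [length_minimalBorder, count_true_minimalBorder] at this
    omega
  obtain ⟨j, hj, hjx⟩ := exists_getElem?_eq_and_count_take_eq hfalse
  exact ⟨by omega, by omega, j, lt_of_south_minimalBorder hj (by omega), by omega⟩

lemma isFullRookPlacement_minimalBorder :
    IsFullRookPlacement n (minimalBorder π) (permPlacement π) :=
  isFullRookPlacement_permPlacement (inBoard_minimalBorder π)

lemma isDyckPath_minimalBorder : IsDyckPath n (minimalBorder π) :=
  (isFullRookPlacement_minimalBorder π).isDyckPath (length_minimalBorder π)
    (count_true_minimalBorder π)

lemma boardMinimal_minimalBorder : BoardMinimal n (minimalBorder π) (permPlacement π) := by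
  intro i hi hi'
  obtain ⟨x, hx, hxn⟩ := exists_rook_of_east_minimalBorder hi
  have htrue := count_take_succ_of_getElem? hi
  have hfalse : ((minimalBorder π).take (i + 1)).count false =
      ((minimalBorder π).take i).count false := by simp [count_take_succ, hi]
  have hcol := lt_of_south_minimalBorder hi' (x := x) (by omega)
  have hrow : ¬ n < π x + 1 + ((minimalBorder π).take i).count false := fun hlt ↦ by
    have := (inBoard_minimalBorder π x).le_count_of_lt hlt
    omega
  exact mem_permPlacement.2 ⟨x, Prod.ext (by simp only; omega) (by simp only; omega)⟩

end MinimalBorder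

section Occurrences

variable {m n : ℕ}

/-- `f` lists the positions, from left to right, of an occurrence of the pattern `σ` in `π`. -/
def IsOccurrence (σ : Equiv.Perm (Fin m)) (π : Equiv.Perm (Fin n)) (f : Fin m → Fin n) : Prop :=
  StrictMono f ∧ ∀ a b : Fin m, σ a < σ b → π (f a) < π (f b)

lemma permContains_iff_exists_isOccurrence_lt {σ : Equiv.Perm (Fin m)}
    {τ : Equiv.Perm (Fin (m + 1))} (hlast : τ (Fin.last m) = Fin.last m)
    (hcast : ∀ a : Fin m, τ a.castSucc = (σ a).castSucc) {π : Equiv.Perm (Fin n)} :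
    PermContains τ π ↔
      ∃ f, IsOccurrence σ π f ∧ ∃ z, ∀ a, f a < z ∧ π (f a) < π z := by
  constructor
  · rintro ⟨f, hf, hπ⟩
    refine ⟨f ∘ Fin.castSucc, ⟨hf.comp Fin.strictMono_castSucc, fun a b hab ↦ hπ _ _ ?_⟩,
      f (Fin.last m), fun a ↦ ⟨hf (Fin.castSucc_lt_last a), hπ _ _ ?_⟩⟩
    · simpa [hcast] using hab
    · simp [hlast, hcast]
  · rintro ⟨f, ⟨hf, hπ⟩, z, hz⟩
    refine ⟨Fin.snoc f z, fun a b hab ↦ ?_, fun a b hab ↦ ?_⟩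
    · cases a using Fin.lastCases with
      | last => exact absurd hab b.le_last.not_gt
      | cast a =>
        cases b using Fin.lastCases with
        | last => simpa using (hz a).1
        | cast b => simpa using hf (Fin.castSucc_lt_castSucc_iff.1 hab)
    · cases a using Fin.lastCases with
      | last => exact absurd hab (by simpa only [hlast] using (τ b).le_last.not_gt)
      | cast a =>
        cases b using Fin.lastCases with
        | last => simpa using (hz a).2
        | cast b => simpa using hπ a b (by simpa [hcast] using hab)

lemma placementContains_permPlacement_iff {σ : Equiv.Perm (Fin m)} {t : List Bool}
    {π : Equiv.Perm (Fin n)} :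
    PlacementContains σ n t (permPlacement π) ↔ ∃ f, IsOccurrence σ π f ∧
      ∃ i ≤ 2 * n, ∀ a, f a + 1 ≤ (t.take i).count true ∧
        π (f a) + 1 + (t.take i).count false ≤ n := by
  constructor
  · rintro ⟨i, hi, p, hp, hcol, hrow⟩
    choose f hf using fun a ↦ mem_permPlacement.1 (hp a).1
    obtain rfl : (fun a ↦ ((f a : ℕ) + 1, (π (f a) : ℕ) + 1)) = p := funext hf
    exact ⟨f, ⟨fun a b hab ↦ by simpa using hcol a b hab,
      fun a b hab ↦ by simpa using hrow a b hab⟩, i, hi, fun a ↦ (hp a).2⟩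
  · rintro ⟨f, ⟨hf, hπ⟩, i, hi, hrect⟩
    exact ⟨i, hi, fun a ↦ (f a + 1, π (f a) + 1), fun a ↦ ⟨by simp, hrect a⟩,
      fun a b hab ↦ by simpa using hf hab, fun a b hab ↦ by simpa using hπ a b hab⟩

lemma IsOccurrence.le_last {σ : Equiv.Perm (Fin (m + 1))} {π : Equiv.Perm (Fin n)}
    {f : Fin (m + 1) → Fin n} (hf : IsOccurrence σ π f) (a : Fin (m + 1)) :
    f a ≤ f (Fin.last m) :=
  hf.1.monotone a.le_last

lemma IsOccurrence.apply_le_symm_last {σ : Equiv.Perm (Fin (m + 1))} {π : Equiv.Perm (Fin n)}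
    {f : Fin (m + 1) → Fin n} (hf : IsOccurrence σ π f) (a : Fin (m + 1)) :
    π (f a) ≤ π (f (σ.symm (Fin.last m))) := by
  have hmono : StrictMono fun b ↦ π (f (σ.symm b)) := fun b c hbc ↦
    hf.2 _ _ (by simpa using hbc)
  simpa using hmono.monotone (σ a).le_last

lemma IsOccurrence.lt_of_le {σ : Equiv.Perm (Fin (m + 1))} (hσ : σ (Fin.last m) ≠ Fin.last m)
    {π : Equiv.Perm (Fin n)} {f : Fin (m + 1) → Fin n} (hf : IsOccurrence σ π f) {z : Fin n}
    (hz : f (Fin.last m) ≤ z) (hπz : π (f (σ.symm (Fin.last m))) ≤ π z) (a : Fin (m + 1)) :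
    f a < z ∧ π (f a) < π z := by
  have hne : f a ≠ z := by
    rintro rfl
    have hlast : Fin.last m = a := hf.1.injective (hz.antisymm (hf.le_last a))
    have htop : σ.symm (Fin.last m) = a :=
      hf.1.injective (π.injective (hπz.antisymm (hf.apply_le_symm_last a)))
    exact hσ (hlast ▸ ((Equiv.symm_apply_eq σ).1 htop).symm)
  exact ⟨((hf.le_last a).trans hz).lt_of_ne hne,
    ((hf.apply_le_symm_last a).trans hπz).lt_of_ne (π.injective.ne hne)⟩

end Occurrences

section Chi

variable {m n : ℕ}

lemma IsOccurrence.exists_vertex_iff {σ : Equiv.Perm (Fin (m + 1))}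
    (hσ : σ (Fin.last m) ≠ Fin.last m) {π : Equiv.Perm (Fin n)} {f : Fin (m + 1) → Fin n}
    (hf : IsOccurrence σ π f) {t : List Bool} (ht : IsDyckPath n t)
    (hR : IsFullRookPlacement n t (permPlacement π)) (hmin : BoardMinimal n t (permPlacement π)) :
    (∃ i ≤ 2 * n, ∀ a, f a + 1 ≤ (t.take i).count true ∧
        π (f a) + 1 + (t.take i).count false ≤ n) ↔
      ∃ z, ∀ a, f a < z ∧ π (f a) < π z := by
  constructor
  · rintro ⟨i, -, hi⟩
    have hcorner : InBoard n t (f (Fin.last m) + 1) (π (f (σ.symm (Fin.last m))) + 1) :=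
      ⟨by omega, by omega, i, (hi _).1, by have := (hi (σ.symm (Fin.last m))).2; omega⟩
    obtain ⟨p, hp, hcol, hrow⟩ := hmin.exists_rook_ge ht hcorner
    obtain ⟨z, rfl⟩ := mem_permPlacement.1 hp
    exact ⟨z, hf.lt_of_le hσ (Nat.succ_le_succ_iff.1 hcol) (Nat.succ_le_succ_iff.1 hrow)⟩
  · rintro ⟨z, hz⟩
    obtain ⟨-, -, i, hcol, hrow⟩ := hR.1 _ (mem_permPlacement.2 ⟨z, rfl⟩)
    have hi : i ≤ 2 * n := by
      by_contra! hlt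
      rw [List.take_of_length_le (ht.1.trans_le hlt.le), ht.count_false] at hrow
      omega
    exact ⟨i, hi, fun a ↦ by have := hz a; grind⟩

theorem placementContains_iff_permContains {σ : Equiv.Perm (Fin (m + 1))}
    {τ : Equiv.Perm (Fin (m + 2))} (hlast : τ (Fin.last (m + 1)) = Fin.last (m + 1))
    (hcast : ∀ a : Fin (m + 1), τ a.castSucc = (σ a).castSucc) (hσ : σ (Fin.last m) ≠ Fin.last m)
    {π : Equiv.Perm (Fin n)} {t : List Bool} (ht : IsDyckPath n t)
    (hR : IsFullRookPlacement n t (permPlacement π)) (hmin : BoardMinimal n t (permPlacement π)) :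
    PlacementContains σ n t (permPlacement π) ↔ PermContains τ π := by
  rw [placementContains_permPlacement_iff, permContains_iff_exists_isOccurrence_lt hlast hcast]
  exact exists_congr fun _ ↦ and_congr_right fun hf ↦ hf.exists_vertex_iff hσ ht hR hmin

/-- The map `χ : π ↦ (R_π, F_π)`, with the board first, as in `MinPlacements`. -/
def chi (π : Equiv.Perm (Fin n)) : List Bool × Finset (ℕ × ℕ) :=
  (minimalBorder π, permPlacement π)

theorem bijOn_chi {σ : Equiv.Perm (Fin (m + 1))} {τ : Equiv.Perm (Fin (m + 2))}
    (hlast : τ (Fin.last (m + 1)) = Fin.last (m + 1))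
    (hcast : ∀ a : Fin (m + 1), τ a.castSucc = (σ a).castSucc)
    (hσ : σ (Fin.last m) ≠ Fin.last m) (n : ℕ) :
    Set.BijOn chi {π : Equiv.Perm (Fin n) | PermAvoids τ π} (MinPlacements n σ) := by
  refine ⟨fun π hπ ↦ ?_, fun π _ π' _ h ↦ permPlacement_injective (congrArg Prod.snd h), ?_⟩
  · exact ⟨isDyckPath_minimalBorder π, isFullRookPlacement_minimalBorder π,
      boardMinimal_minimalBorder π, (placementContains_iff_permContains hlast hcast hσ
        (isDyckPath_minimalBorder π) (isFullRookPlacement_minimalBorder π)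
        (boardMinimal_minimalBorder π)).not.2 hπ⟩
  · rintro ⟨t, R⟩ ⟨ht, hR, hmin, havoid⟩
    obtain ⟨π, rfl⟩ := hR.exists_permPlacement_eq ht.2.1
    refine ⟨π, (placementContains_iff_permContains hlast hcast hσ ht hR hmin).not.1 havoid,
      Prod.ext ?_ rfl⟩
    exact (boardMinimal_minimalBorder π).eq_of_boardMinimal hmin (isDyckPath_minimalBorder π) ht
      (isFullRookPlacement_minimalBorder π) hR

end Chi

/-- If `τ ∈ S_k` with `τ(k) = k` and `τ(k−1) ≠ k−1`, then the map
`χ : π ↦ (R_π, F_π)` restricts to a bijection between `S_n(τ)` and the board-minimal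
full rook placements on boards of `F_n` avoiding `τ(1)…τ(k−1)`; in particular the two
sets are equinumerous. -/
theorem chi_bijection_minimal_placements
    (k : ℕ) (hk : 2 ≤ k) (τ : Equiv.Perm (Fin k))
    (hfix : (τ ⟨k - 1, by omega⟩ : ℕ) = k - 1)
    (hnfix : (τ ⟨k - 2, by omega⟩ : ℕ) ≠ k - 2)
    (τ' : Equiv.Perm (Fin (k - 1)))
    (hτ' : ∀ a : Fin (k - 1), (τ' a : ℕ) = (τ ⟨a.1, by have := a.isLt; omega⟩ : ℕ))
    (n : ℕ) :
    (∀ π : Equiv.Perm (Fin n), PermAvoids τ π →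
      ∃! tR : List Bool × Finset (ℕ × ℕ),
        tR ∈ MinPlacements n τ' ∧ tR.2 = permPlacement π) ∧
    (∀ tR ∈ MinPlacements n τ',
      ∃! π : Equiv.Perm (Fin n), PermAvoids τ π ∧ permPlacement π = tR.2) ∧
    scount τ n = (MinPlacements n τ').ncard := by
  obtain ⟨m, rfl⟩ := Nat.exists_eq_add_of_le' hk
  have hσ : τ' (Fin.last m) ≠ Fin.last m := fun h ↦
    hnfix ((hτ' (Fin.last m)).symm.trans (congrArg Fin.val h))
  have hχ : Set.BijOn chi {π : Equiv.Perm (Fin n) | PermAvoids τ π} (MinPlacements n τ') :=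
    bijOn_chi (Fin.ext hfix) (fun a ↦ Fin.ext (hτ' a).symm) hσ n
  refine ⟨fun π hπ ↦ ⟨chi π, ⟨hχ.mapsTo hπ, rfl⟩, ?_⟩, fun tR htR ↦ ?_, ?_⟩
  · rintro tR ⟨htR, hR⟩
    obtain ⟨π', -, rfl⟩ := hχ.surjOn htR
    exact congrArg chi (permPlacement_injective hR)
  · obtain ⟨π, hπ, rfl⟩ := hχ.surjOn htR
    exact ⟨π, ⟨hπ, rfl⟩, fun π' hπ' ↦ permPlacement_injective hπ'.2⟩
  · exact (Nat.card_coe_set_eq _).trans hχ.ncard_eq
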